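/- arXiv:2207.12704 — 3 statements merged into one kernel-verified Lean document; each statement's English description precedes it below -/
import Mathlib

section
/- Let A be a set with a length function μ. Then F_ℝ(A), with the pseudometric induced by ‖·‖_{F_ℝ(A;μ)}, is a geodesic pseudometric space: for any w, w' ∈ F_ℝ(A) there is a path α : [0,1] → F_ℝ(A) with α(0)=w, α(1)=w' and d(α(t₁),α(t₂)) = |t₂−t₁|·d(w,w') for all t₁,t₂ ∈ [0,1]. -/
/-!
The heart of the matter is that the infimum defining `‖g‖` is attained. Spell `g` as a word in
letters from the factors, and shorten words by two kinds of moves: deleting a letter `x` at cost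
`‖x‖`, and multiplying two neighbouring letters from the same factor for free. A given word has
only finitely many sequences of moves, so there is a least cost of reducing it to the empty word.
This least cost depends only on `g`. Indeed, two moves on the same word lead to words which either
have a common shortening or differ by changing single letters, and a change of `x` into `x'`
raises the least cost by at most `‖x⁻¹ x'‖`. Since a product of conjugates `∏ yᵢ xᵢ yᵢ⁻¹` spells a
word reducing at cost `∑ ‖xᵢ‖`, the least cost for `g` is the least length of such an expression.

Given a length-minimizing expression `w⁻¹ w' = ∏ yᵢ xᵢ yᵢ⁻¹`, one lets every `xᵢ` run
simultaneously along a geodesic from `1`. By conjugation invariance the speeds add up, so the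
resulting path from `w` to `w'` has speed at most `‖w⁻¹ w'‖`, and the triangle inequality turns this
into the geodesic equality.
-/

/-- The set of total lengths of expressions of `g` as a product of conjugates
of generators `gen i ^ {±1}`, each weighted by the length function `ℓ`. -/
def wordNormSet {G : Type*} [Group G] {I : Type*}
    (gen : I → G) (ℓ : I → ℝ) (g : G) : Set ℝ :=
  { x | ∃ l : List (G × I × Bool),
      g = (l.map fun p => p.1 * (if p.2.2 then gen p.2.1 else (gen p.2.1)⁻¹) * p.1⁻¹).prod ∧
      x = (l.map fun p => ℓ p.2.1).sum }

/-- The conjugation-invariant word norm associated to a length function. -/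
noncomputable def wordNorm {G : Type*} [Group G] {I : Type*}
    (gen : I → G) (ℓ : I → ℝ) (g : G) : ℝ :=
  sInf (wordNormSet gen ℓ g)

/-- `F_ℝ(A)`: the free product of copies of `ℝ` indexed by `A`. -/
abbrev FR (A : Type*) : Type _ := Monoid.CoprodI (fun _ : A => Multiplicative ℝ)

/-- The generator `a(r)` of `F_ℝ(A)`. -/
def genFR (A : Type*) (p : A × ℝ) : FR A :=
  Monoid.CoprodI.of (i := p.1) (Multiplicative.ofAdd p.2)

/-- The conjugation-invariant word norm `‖·‖_{F_ℝ(A;μ)}`. -/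
noncomputable def FRnorm {A : Type*} (μ : A → ℝ) : FR A → ℝ :=
  wordNorm (genFR A) (fun p => |p.2| * μ p.1)

open Monoid Set

section WordNorm

variable {G I J : Type*} [Group G] {gen : I → G} {ℓ : I → ℝ} {g h : G} {x y : ℝ}

theorem zero_mem_wordNormSet_one : 0 ∈ wordNormSet gen ℓ (1 : G) :=
  ⟨[], by simp, by simp⟩

theorem conj_mem_wordNormSet (z : G) (i : I) : ℓ i ∈ wordNormSet gen ℓ (z * gen i * z⁻¹) :=
  ⟨[(z, i, true)], by simp, by simp⟩

theorem gen_mem_wordNormSet (i : I) : ℓ i ∈ wordNormSet gen ℓ (gen i) := by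
  simpa using conj_mem_wordNormSet (gen := gen) (ℓ := ℓ) 1 i

theorem conj_inv_mem_wordNormSet (z : G) (i : I) :
    ℓ i ∈ wordNormSet gen ℓ (z * (gen i)⁻¹ * z⁻¹) :=
  ⟨[(z, i, false)], by simp, by simp⟩

theorem add_mem_wordNormSet_mul (hx : x ∈ wordNormSet gen ℓ g) (hy : y ∈ wordNormSet gen ℓ h) :
    x + y ∈ wordNormSet gen ℓ (g * h) := by
  obtain ⟨l, rfl, rfl⟩ := hx
  obtain ⟨l', rfl, rfl⟩ := hy
  exact ⟨l ++ l', by simp, by simp⟩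

theorem wordNormSet_induction {P : G → ℝ → Prop} (one : P 1 0)
    (conj : ∀ z i, P (z * gen i * z⁻¹) (ℓ i))
    (conj_inv : ∀ z i, P (z * (gen i)⁻¹ * z⁻¹) (ℓ i))
    (mul : ∀ g h x y, P g x → P h y → P (g * h) (x + y)) (hx : x ∈ wordNormSet gen ℓ g) :
    P g x := by
  obtain ⟨l, rfl, rfl⟩ := hx
  induction l with
  | nil => exact one
  | cons p l ih =>
    obtain ⟨z, i, b⟩ := p
    cases b with
    | true => exact mul _ _ _ _ (conj z i) ih
    | false => exact mul _ _ _ _ (conj_inv z i) ih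

theorem inv_mem_wordNormSet (hx : x ∈ wordNormSet gen ℓ g) : x ∈ wordNormSet gen ℓ g⁻¹ := by
  refine wordNormSet_induction (P := fun g x => x ∈ wordNormSet gen ℓ g⁻¹) ?_ ?_ ?_ ?_ hx
  · simpa using zero_mem_wordNormSet_one
  · intro z i
    simpa [mul_assoc] using conj_inv_mem_wordNormSet z i
  · intro z i
    simpa [mul_assoc] using conj_mem_wordNormSet z i
  · intro g h x y hg hh
    rw [mul_inv_rev, add_comm]
    exact add_mem_wordNormSet_mul hh hg

theorem wordNormSet_inv (g : G) : wordNormSet gen ℓ g⁻¹ = wordNormSet gen ℓ g :=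
  Subset.antisymm (fun _ hx => by simpa using inv_mem_wordNormSet hx)
    fun _ hx => inv_mem_wordNormSet hx

theorem mem_wordNormSet_conj (z : G) (hx : x ∈ wordNormSet gen ℓ g) :
    x ∈ wordNormSet gen ℓ (z * g * z⁻¹) := by
  refine wordNormSet_induction (P := fun g x => x ∈ wordNormSet gen ℓ (z * g * z⁻¹))
    ?_ ?_ ?_ ?_ hx
  · simpa using zero_mem_wordNormSet_one
  · intro y i
    simpa [mul_assoc] using conj_mem_wordNormSet (z * y) i
  · intro y i
    simpa [mul_assoc] using conj_inv_mem_wordNormSet (z * y) i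
  · intro g h x y hg hh
    rw [← conj_mul]
    exact add_mem_wordNormSet_mul hg hh

theorem wordNormSet_conj (z g : G) : wordNormSet gen ℓ (z * g * z⁻¹) = wordNormSet gen ℓ g :=
  Subset.antisymm (fun _ hx => by simpa [mul_assoc] using mem_wordNormSet_conj z⁻¹ hx)
    fun _ hx => mem_wordNormSet_conj z hx

theorem wordNormSet_comp_subset (f : J → I) (g : G) :
    wordNormSet (gen ∘ f) (ℓ ∘ f) g ⊆ wordNormSet gen ℓ g := by
  rintro _ ⟨l, rfl, rfl⟩
  exact ⟨l.map (Prod.map id (Prod.map f id)), by simp [Function.comp_def],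
    by simp [Function.comp_def]⟩

theorem wordNormSet_comp_equiv (e : J ≃ I) (g : G) :
    wordNormSet (gen ∘ e) (ℓ ∘ e) g = wordNormSet gen ℓ g := by
  refine (wordNormSet_comp_subset e g).antisymm ?_
  simpa [Function.comp_assoc] using
    wordNormSet_comp_subset (gen := gen ∘ e) (ℓ := ℓ ∘ e) e.symm g

theorem wordNorm_comp_equiv (e : J ≃ I) : wordNorm (gen ∘ e) (ℓ ∘ e) = wordNorm gen ℓ :=
  funext fun g => congrArg sInf (wordNormSet_comp_equiv e g)

theorem wordNorm_conj (z g : G) : wordNorm gen ℓ (z * g * z⁻¹) = wordNorm gen ℓ g :=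
  congrArg sInf (wordNormSet_conj z g)

theorem nonneg_of_mem_wordNormSet (hℓ : ∀ i, 0 ≤ ℓ i) (hx : x ∈ wordNormSet gen ℓ g) : 0 ≤ x :=
  wordNormSet_induction (P := fun _ x => 0 ≤ x) le_rfl (fun _ => hℓ) (fun _ => hℓ)
    (fun _ _ _ _ => add_nonneg) hx

theorem bddBelow_wordNormSet (hℓ : ∀ i, 0 ≤ ℓ i) (g : G) : BddBelow (wordNormSet gen ℓ g) :=
  ⟨0, fun _ => nonneg_of_mem_wordNormSet hℓ⟩

theorem wordNorm_le_of_mem (hℓ : ∀ i, 0 ≤ ℓ i) (hx : x ∈ wordNormSet gen ℓ g) :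
    wordNorm gen ℓ g ≤ x :=
  csInf_le (bddBelow_wordNormSet hℓ g) hx

theorem wordNorm_gen_le (hℓ : ∀ i, 0 ≤ ℓ i) (i : I) : wordNorm gen ℓ (gen i) ≤ ℓ i :=
  wordNorm_le_of_mem hℓ (gen_mem_wordNormSet i)

theorem wordNorm_one (hℓ : ∀ i, 0 ≤ ℓ i) : wordNorm gen ℓ (1 : G) = 0 :=
  (wordNorm_le_of_mem hℓ zero_mem_wordNormSet_one).antisymm
    (Real.sInf_nonneg fun _ => nonneg_of_mem_wordNormSet hℓ)

theorem wordNorm_mul_le (hℓ : ∀ i, 0 ≤ ℓ i) (hg : (wordNormSet gen ℓ g).Nonempty)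
    (hh : (wordNormSet gen ℓ h).Nonempty) :
    wordNorm gen ℓ (g * h) ≤ wordNorm gen ℓ g + wordNorm gen ℓ h := by
  unfold wordNorm
  rw [← csInf_add hg (bddBelow_wordNormSet hℓ g) hh (bddBelow_wordNormSet hℓ h)]
  refine csInf_le_csInf (bddBelow_wordNormSet hℓ _) (hg.add hh) ?_
  rintro _ ⟨x, hx, y, hy, rfl⟩
  exact add_mem_wordNormSet_mul hx hy

/-- The word norm as a group seminorm. Nonemptiness says that the conjugates of the generators
generate `G`; without it `wordNorm` takes the junk value `sInf ∅ = 0`. -/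
noncomputable def wordSeminorm (gen : I → G) (ℓ : I → ℝ) (hℓ : ∀ i, 0 ≤ ℓ i)
    (hne : ∀ g, (wordNormSet gen ℓ g).Nonempty) : GroupSeminorm G where
  toFun := wordNorm gen ℓ
  map_one' := wordNorm_one hℓ
  mul_le' g h := wordNorm_mul_le hℓ (hne g) (hne h)
  inv' g := congrArg sInf (wordNormSet_inv g)

end WordNorm

section Geodesic

variable {G : Type*} [Group G]

/-- The left-invariant pseudometric `d(g, h) = N (g⁻¹ * h)` is geodesic. Only the values of a path
on `[0, 1]` matter. -/
def IsGeodesicNorm (N : G → ℝ) : Prop :=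
  ∀ g h : G, ∃ α : ℝ → G, α 0 = g ∧ α 1 = h ∧
    ∀ s ∈ Icc (0 : ℝ) 1, ∀ t ∈ Icc (0 : ℝ) 1, N ((α s)⁻¹ * α t) = |t - s| * N (g⁻¹ * h)

/-- There is a path on `[0, 1]` from `1` to `g` which is `c`-Lipschitz for the left-invariant
pseudometric of `N`. -/
def JoinedWithin (N : G → ℝ) (g : G) (c : ℝ) : Prop :=
  ∃ α : ℝ → G, α 0 = 1 ∧ α 1 = g ∧
    ∀ s ∈ Icc (0 : ℝ) 1, ∀ t ∈ Icc (0 : ℝ) 1, N ((α s)⁻¹ * α t) ≤ |t - s| * c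

theorem IsGeodesicNorm.joinedWithin {N : G → ℝ} (hN : IsGeodesicNorm N) (g : G) :
    JoinedWithin N g (N g) := by
  obtain ⟨α, h0, h1, hα⟩ := hN 1 g
  exact ⟨α, h0, h1, fun s hs t ht => by simpa using (hα s hs t ht).le⟩

theorem JoinedWithin.map {H : Type*} [Group H] {N : G → ℝ} {N' : H → ℝ} {g : G} {c : ℝ}
    (hg : JoinedWithin N g c) (f : G →* H) (hf : ∀ x, N' (f x) ≤ N x) :
    JoinedWithin N' (f g) c := by
  obtain ⟨α, h0, h1, hα⟩ := hg
  refine ⟨f ∘ α, by simp [h0], by simp [h1], fun s hs t ht => ?_⟩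
  simpa using (hf _).trans (hα s hs t ht)

variable {N : GroupSeminorm G} {g h : G} {c d : ℝ}

theorem joinedWithin_one : JoinedWithin N 1 0 :=
  ⟨fun _ => 1, rfl, rfl, by simp⟩

theorem JoinedWithin.inv (hN : ∀ x y, N (x * y * x⁻¹) = N y) (hg : JoinedWithin N g c) :
    JoinedWithin N g⁻¹ c := by
  obtain ⟨α, h0, h1, hα⟩ := hg
  refine ⟨fun t => (α t)⁻¹, by simp [h0], by simp [h1], fun s hs t ht => ?_⟩
  have : N ((α s)⁻¹⁻¹ * (α t)⁻¹) = N ((α s)⁻¹ * α t) := by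
    rw [← map_inv_eq_map N ((α s)⁻¹ * α t), ← hN (α s) ((α s)⁻¹ * α t)⁻¹]
    group
  exact this.trans_le (hα s hs t ht)

theorem JoinedWithin.mul (hN : ∀ x y, N (x * y * x⁻¹) = N y) (hg : JoinedWithin N g c)
    (hh : JoinedWithin N h d) : JoinedWithin N (g * h) (c + d) := by
  obtain ⟨α, α0, α1, hα⟩ := hg
  obtain ⟨β, β0, β1, hβ⟩ := hh
  refine ⟨fun t => α t * β t, by simp [α0, β0], by simp [α1, β1], fun s hs t ht => ?_⟩
  calc N ((α s * β s)⁻¹ * (α t * β t))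
      = N ((β s)⁻¹ * ((α s)⁻¹ * α t) * (β s)⁻¹⁻¹ * ((β s)⁻¹ * β t)) := by group
    _ ≤ N ((β s)⁻¹ * ((α s)⁻¹ * α t) * (β s)⁻¹⁻¹) + N ((β s)⁻¹ * β t) := map_mul_le_add N _ _
    _ = N ((α s)⁻¹ * α t) + N ((β s)⁻¹ * β t) := by rw [hN]
    _ ≤ |t - s| * c + |t - s| * d := add_le_add (hα s hs t ht) (hβ s hs t ht)
    _ = |t - s| * (c + d) := (mul_add _ _ _).symm

theorem JoinedWithin.conj (hN : ∀ x y, N (x * y * x⁻¹) = N y) (z : G)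
    (hg : JoinedWithin N g c) : JoinedWithin N (z * g * z⁻¹) c :=
  hg.map (MulAut.conj z).toMonoidHom fun x => (hN z x).le

theorem JoinedWithin.of_mem_wordNormSet {I : Type*} {gen : I → G} {ℓ : I → ℝ}
    (hN : ∀ x y, N (x * y * x⁻¹) = N y) (hgen : ∀ i, JoinedWithin N (gen i) (ℓ i))
    (hc : c ∈ wordNormSet gen ℓ g) : JoinedWithin N g c :=
  wordNormSet_induction (P := JoinedWithin N) joinedWithin_one
    (fun z i => (hgen i).conj hN z) (fun z i => ((hgen i).inv hN).conj hN z)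
    (fun _ _ _ _ hg hh => hg.mul hN hh) hc

theorem IsGeodesicNorm.of_joinedWithin (hN : ∀ g, JoinedWithin N g (N g)) :
    IsGeodesicNorm N := by
  intro g h
  obtain ⟨α, h0, h1, hα⟩ := hN (g⁻¹ * h)
  have symm (s t : ℝ) : N ((α s)⁻¹ * α t) = N ((α t)⁻¹ * α s) := by
    rw [← map_inv_eq_map N]
    simp
  have triangle (r s t : ℝ) : N ((α r)⁻¹ * α t) ≤ N ((α r)⁻¹ * α s) + N ((α s)⁻¹ * α t) := by
    simpa [mul_assoc] using map_mul_le_add N ((α r)⁻¹ * α s) ((α s)⁻¹ * α t)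
  refine ⟨fun t => g * α t, by simp [h0], by simp [h1], fun s hs t ht => ?_⟩
  rw [mul_inv_rev, mul_assoc, inv_mul_cancel_left]
  wlog hst : s ≤ t generalizing s t
  · rw [symm, this t ht s hs (le_of_not_ge hst), abs_sub_comm]
  refine (hα s hs t ht).antisymm ?_
  have hα0s := hα 0 (by simp) s hs
  have hαt1 := hα t ht 1 (by simp)
  have h01 : N ((α 0)⁻¹ * α 1) = N (g⁻¹ * h) := by simp [h0, h1]
  rw [sub_zero, abs_of_nonneg hs.1] at hα0s
  rw [abs_of_nonneg (sub_nonneg.2 ht.2)] at hαt1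
  rw [abs_of_nonneg (sub_nonneg.2 hst)]
  linarith [triangle 0 s 1, triangle s t 1]

theorem isGeodesicNorm_wordNorm {I : Type*} {gen : I → G} {ℓ : I → ℝ} (hℓ : ∀ i, 0 ≤ ℓ i)
    (hmem : ∀ g, wordNorm gen ℓ g ∈ wordNormSet gen ℓ g)
    (hgen : ∀ i, JoinedWithin (wordNorm gen ℓ) (gen i) (ℓ i)) :
    IsGeodesicNorm (wordNorm gen ℓ) :=
  .of_joinedWithin (N := wordSeminorm gen ℓ hℓ fun g => ⟨_, hmem g⟩) fun g =>
    .of_mem_wordNormSet wordNorm_conj hgen (hmem g)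

end Geodesic

section FreeProduct

variable {ι : Type*} {G : ι → Type*} [∀ i, Group (G i)] {N : ∀ i, GroupSeminorm (G i)}
  {w w' w₁ w₂ : List (Σ i, G i)} {k k₁ k₂ x y : ℝ}

/-- The element of the free product spelled by a word in letters from the factors. The word need
not be reduced. -/
def spell (w : List (Σ i, G i)) : CoprodI G :=
  (w.map fun p => CoprodI.of p.2).prod

@[simp]
theorem spell_nil : spell ([] : List (Σ i, G i)) = 1 := rfl

@[simp]
theorem spell_cons (p : Σ i, G i) (w : List (Σ i, G i)) :
    spell (p :: w) = CoprodI.of p.2 * spell w := by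
  simp [spell]

@[simp]
theorem spell_append (w w' : List (Σ i, G i)) : spell (w ++ w') = spell w * spell w' := by
  simp [spell]

theorem spell_surjective : Function.Surjective (spell : List (Σ i, G i) → CoprodI G) := by
  intro g
  induction g using CoprodI.induction_left with
  | one => exact ⟨[], rfl⟩
  | @mul i x _ ih =>
    obtain ⟨w, rfl⟩ := ih
    exact ⟨⟨i, x⟩ :: w, by simp⟩

theorem spell_eq_mk (w : List (Σ i, G i)) :
    spell w = Con.mk' (conGen (CoprodI.Rel G)) (FreeMonoid.ofList w) := by
  induction w with
  | nil => rfl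
  | cons p w ih => rw [spell_cons, ih]; rfl

/-- `Shortens N w w' k`: a single move of cost `k` turns the word `w` into the shorter word `w'`. A
move deletes a letter at the cost of its seminorm, or multiplies two neighbouring letters from the
same factor for free. -/
inductive Shortens (N : ∀ i, GroupSeminorm (G i)) :
    List (Σ i, G i) → List (Σ i, G i) → ℝ → Prop
  | delete {i : ι} (a : G i) (w : List (Σ i, G i)) : Shortens N (⟨i, a⟩ :: w) w (N i a)
  | merge {i : ι} (a b : G i) (w : List (Σ i, G i)) :
      Shortens N (⟨i, a⟩ :: ⟨i, b⟩ :: w) (⟨i, a * b⟩ :: w) 0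
  | cons (p : Σ i, G i) {w w' : List (Σ i, G i)} {k : ℝ} (h : Shortens N w w' k) :
      Shortens N (p :: w) (p :: w') k

/-- `Perturbs N w w' k`: the word `w'` arises from `w` by replacing each letter by one from the same
factor, at total distance `k`. -/
inductive Perturbs (N : ∀ i, GroupSeminorm (G i)) :
    List (Σ i, G i) → List (Σ i, G i) → ℝ → Prop
  | nil : Perturbs N [] [] 0
  | cons {i : ι} (a a' : G i) {w w' : List (Σ i, G i)} {k : ℝ} (h : Perturbs N w w' k) :
      Perturbs N (⟨i, a⟩ :: w) (⟨i, a'⟩ :: w') (N i (a⁻¹ * a') + k)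

/-- `ReducesWithin N w x`: some sequence of moves of total cost at most `x` takes the word `w` to
the empty word. -/
inductive ReducesWithin (N : ∀ i, GroupSeminorm (G i)) : List (Σ i, G i) → ℝ → Prop
  | nil {x : ℝ} (hx : 0 ≤ x) : ReducesWithin N [] x
  | shorten {w w' : List (Σ i, G i)} {k x : ℝ} (h : Shortens N w w' k)
      (h' : ReducesWithin N w' x) : ReducesWithin N w (k + x)

theorem Shortens.append_left (h : Shortens N w w' k) (u : List (Σ i, G i)) :
    Shortens N (u ++ w) (u ++ w') k := by
  induction u with
  | nil => exact h
  | cons p u ih => exact ih.cons p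

theorem Shortens.length_eq (h : Shortens N w w' k) : w.length = w'.length + 1 := by
  induction h with
  | delete | merge => simp
  | cons _ _ ih => simp [ih]

theorem Perturbs.refl (w : List (Σ i, G i)) : Perturbs N w w 0 := by
  induction w with
  | nil => exact .nil
  | cons p w ih => simpa using ih.cons p.2 p.2

theorem Perturbs.head {i : ι} (a a' : G i) (w : List (Σ i, G i)) :
    Perturbs N (⟨i, a⟩ :: w) (⟨i, a'⟩ :: w) (N i (a⁻¹ * a')) := by
  simpa using (Perturbs.refl w).cons a a'

theorem ReducesWithin.mono (h : ReducesWithin N w x) (hxy : x ≤ y) : ReducesWithin N w y := by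
  induction h generalizing y with
  | nil hx => exact .nil (hx.trans hxy)
  | @shorten _ _ k _ h _ ih =>
    simpa using ReducesWithin.shorten h (ih (le_sub_iff_add_le'.2 hxy))

theorem ReducesWithin.append (hw : ReducesWithin N w x) (hw' : ReducesWithin N w' y) :
    ReducesWithin N (w ++ w') (x + y) := by
  induction hw' with
  | nil hy => simpa using hw.mono (le_add_of_nonneg_right hy)
  | shorten h _ ih =>
    rw [add_left_comm]
    exact .shorten (h.append_left w) ih

theorem exists_shortens (hw : w ≠ []) : ∃ w' k, Shortens N w w' k := by
  obtain ⟨p, v, rfl⟩ := List.exists_cons_of_ne_nil hw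
  exact ⟨v, _, .delete p.2 v⟩

theorem finite_setOf_shortens (w : List (Σ i, G i)) :
    {q : List (Σ i, G i) × ℝ | Shortens N w q.1 q.2}.Finite := by
  induction w with
  | nil => exact finite_empty.subset fun _ h => nomatch h
  | cons p w ih =>
    have merges : {q : List (Σ i, G i) × ℝ |
        ∃ b v, w = ⟨p.1, b⟩ :: v ∧ q = (⟨p.1, p.2 * b⟩ :: v, 0)}.Finite := by
      refine Set.Subsingleton.finite ?_
      rintro _ ⟨b, v, rfl, rfl⟩ _ ⟨b', v', h, rfl⟩
      cases h
      rfl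
    refine (((ih.image fun q => (p :: q.1, q.2)).union merges).insert (w, N p.1 p.2)).subset ?_
    rintro ⟨w', k⟩ h
    cases (h : Shortens N (p :: w) w' k) with
    | delete => exact .inl rfl
    | merge a b v => exact .inr (.inr ⟨b, v, rfl, rfl⟩)
    | cons _ h => exact .inr (.inl ⟨(_, k), h, rfl⟩)

theorem exists_isLeast_reducesWithin (N : ∀ i, GroupSeminorm (G i)) (w : List (Σ i, G i)) :
    ∃ m, IsLeast {x | ReducesWithin N w x} m := by
  induction hn : w.length generalizing w with
  | zero =>
    obtain rfl := List.length_eq_zero_iff.1 hn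
    refine ⟨0, .nil le_rfl, fun x hx => ?_⟩
    cases (hx : ReducesWithin N [] x) with
    | nil hx => exact hx
    | shorten h => cases h
  | succ n ih =>
    choose! m hm using ih
    have hne : w ≠ [] := List.ne_nil_of_length_eq_add_one hn
    obtain ⟨w₀, k₀, h₀⟩ := exists_shortens (N := N) hne
    obtain ⟨⟨w₁, k₁⟩, h₁, hmin⟩ := exists_min_image _ (fun q => q.2 + m q.1)
      (finite_setOf_shortens w) ⟨(w₀, k₀), h₀⟩
    have hlength {w' k} (h : Shortens N w w' k) : w'.length = n := by
      have := h.length_eq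
      lia
    refine ⟨k₁ + m w₁, .shorten h₁ (hm w₁ (hlength h₁)).1, fun x hx => ?_⟩
    cases (hx : ReducesWithin N w x) with
    | nil => exact absurd rfl hne
    | @shorten _ w' k x h h' =>
      exact (hmin (w', k) h).trans (add_le_add_right ((hm w' (hlength h)).2 h') k)

theorem Perturbs.exists_shortens (hN : ∀ i x y, N i (x * y * x⁻¹) = N i y)
    (hp : Perturbs N w w₁ k₁) (hs : Shortens N w w₂ k₂) :
    ∃ w' c₁ c₂, Shortens N w₁ w' c₁ ∧ Perturbs N w₂ w' c₂ ∧ c₁ + c₂ ≤ k₁ + k₂ := by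
  induction hs generalizing w₁ k₁ with
  | @delete i a v =>
    obtain _ | @⟨_, _, a', _, v', k, hp⟩ := hp
    refine ⟨v', _, k, .delete a' v', hp, ?_⟩
    have : N i a' ≤ N i a + N i (a⁻¹ * a') := by simpa using map_mul_le_add (N i) a (a⁻¹ * a')
    linarith
  | @merge i a b v =>
    obtain _ | @⟨_, _, a', _, _, _, _ | @⟨_, _, b', _, v', k, hp⟩⟩ := hp
    refine ⟨_, 0, _, .merge a' b' v', hp.cons (a * b) (a' * b'), ?_⟩
    have : N i ((a * b)⁻¹ * (a' * b')) ≤ N i (a⁻¹ * a') + N i (b⁻¹ * b') := by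
      calc N i ((a * b)⁻¹ * (a' * b'))
          = N i (b⁻¹ * (a⁻¹ * a') * b⁻¹⁻¹ * (b⁻¹ * b')) := by group
        _ ≤ N i (b⁻¹ * (a⁻¹ * a') * b⁻¹⁻¹) + N i (b⁻¹ * b') := map_mul_le_add (N i) _ _
        _ = N i (a⁻¹ * a') + N i (b⁻¹ * b') := by rw [hN]
    linarith
  | cons _ _ ih =>
    obtain _ | @⟨_, _, a', _, v', k, hp⟩ := hp
    obtain ⟨w', c₁, c₂, hs', hp', hc⟩ := ih hp
    exact ⟨_, c₁, _, hs'.cons _, hp'.cons _ a', by linarith⟩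

theorem ReducesWithin.perturb (hN : ∀ i x y, N i (x * y * x⁻¹) = N i y)
    (hw : ReducesWithin N w x) (hp : Perturbs N w w' k) : ReducesWithin N w' (x + k) := by
  induction hw generalizing w' k with
  | nil hx =>
    cases hp
    simpa using .nil hx
  | shorten hs _ ih =>
    obtain ⟨v, c₁, c₂, hs', hp', hc⟩ := hp.exists_shortens hN hs
    exact (ReducesWithin.shorten hs' (ih hp')).mono (by linarith)

theorem Shortens.diamond (hN : ∀ i x y, N i (x * y * x⁻¹) = N i y)
    (h₁ : Shortens N w w₁ k₁) (h₂ : Shortens N w w₂ k₂) :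
    (∃ k ≤ k₁ + k₂, Perturbs N w₁ w₂ k) ∨
      ∃ w' c₁ c₂, Shortens N w₁ w' c₁ ∧ Shortens N w₂ w' c₂ ∧ c₁ + c₂ ≤ k₁ + k₂ := by
  induction h₁ generalizing w₂ k₂ with
  | @delete i a v =>
    cases h₂ with
    | delete => exact .inl ⟨0, by positivity, .refl v⟩
    | merge _ b v => exact .inl ⟨_, by simp [← hN i b⁻¹ a, mul_assoc], .head b (a * b) v⟩
    | cons _ h => exact .inr ⟨_, _, _, h, .delete a _, (add_comm _ _).le⟩
  | @merge i a b v =>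
    cases h₂ with
    | delete =>
      refine .inl ⟨_, ?_, .head (a * b) b v⟩
      have := hN i b⁻¹ a⁻¹
      simp_all [mul_assoc]
    | merge => exact .inl ⟨0, by simp, .refl _⟩
    | cons _ h =>
      cases h with
      | delete => exact .inl ⟨_, by simp, .head (a * b) a v⟩
      | merge _ c v =>
        refine .inr ⟨_, 0, 0, .merge (a * b) c v, ?_, by simp⟩
        rw [mul_assoc]
        exact .merge a (b * c) v
      | cons _ h => exact .inr ⟨_, _, _, h.cons _, .merge a b _, (add_comm _ _).le⟩
  | @cons p v v' k h ih =>
    cases h₂ with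
    | @delete i a => exact .inr ⟨_, _, _, .delete a v', h, (add_comm _ _).le⟩
    | @merge i a b v =>
      cases h with
      | delete => exact .inl ⟨N i (a⁻¹ * (a * b)), by simp, .head a (a * b) _⟩
      | merge _ c v =>
        refine .inr ⟨_, 0, 0, .merge a (b * c) v, ?_, by simp⟩
        rw [← mul_assoc]
        exact .merge (a * b) c v
      | cons _ h => exact .inr ⟨_, _, _, .merge a b _, h.cons _, (add_comm _ _).le⟩
    | cons _ h₂ =>
      obtain ⟨c, hc, hp⟩ | ⟨w', c₁, c₂, hs₁, hs₂, hc⟩ := ih h₂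
      · exact .inl ⟨c, hc, by simpa using hp.cons p.2 p.2⟩
      · exact .inr ⟨_, c₁, c₂, hs₁.cons p, hs₂.cons p, hc⟩

theorem ReducesWithin.of_shortens (hN : ∀ i x y, N i (x * y * x⁻¹) = N i y)
    (hw : ReducesWithin N w x) (h : Shortens N w w' k) : ReducesWithin N w' (x + k) := by
  induction hw generalizing w' k with
  | nil => cases h
  | shorten hs hw ih =>
    obtain ⟨c, hc, hp⟩ | ⟨v, c₁, c₂, hs₁, hs₂, hc⟩ := hs.diamond hN h
    · exact (hw.perturb hN hp).mono (by linarith)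
    · exact (ReducesWithin.shorten hs₂ (ih hs₁)).mono (by linarith)

theorem Shortens.reducesWithin_iff (hN : ∀ i x y, N i (x * y * x⁻¹) = N i y)
    (h : Shortens N w w' 0) : ReducesWithin N w x ↔ ReducesWithin N w' x :=
  ⟨fun hw => by simpa using hw.of_shortens hN h, fun hw' => by simpa using hw'.shorten h⟩

theorem reducesWithin_congr (hN : ∀ i x y, N i (x * y * x⁻¹) = N i y)
    (h : spell w = spell w') : ReducesWithin N w x ↔ ReducesWithin N w' x := by
  have hrel : ConGen.Rel (CoprodI.Rel G) (FreeMonoid.ofList w) (FreeMonoid.ofList w') := by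
    rw [spell_eq_mk, spell_eq_mk] at h
    exact (Con.eq _).1 h
  suffices ∀ {a b}, ConGen.Rel (CoprodI.Rel G) a b → ∀ u v : List (Σ i, G i),
      ReducesWithin N (u ++ (a.toList ++ v)) x ↔ ReducesWithin N (u ++ (b.toList ++ v)) x by
    simpa using this hrel [] []
  intro a b hab u v
  induction hab generalizing u v with
  | of _ _ hr =>
    cases hr with
    | of_one i =>
      have := Shortens.delete (N := N) (1 : G i) v
      rw [map_one_eq_zero] at this
      exact (this.append_left u).reducesWithin_iff hN
    | of_mul a b => exact ((Shortens.merge a b v).append_left u).reducesWithin_iff hN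
  | refl => rfl
  | symm _ ih => exact (ih u v).symm
  | trans _ _ ih ih' => exact (ih u v).trans (ih' u v)
  | @mul a b c d _ _ ih ih' =>
    have hab := ih u (c.toList ++ v)
    have hcd := ih' (u ++ b.toList) v
    simp only [FreeMonoid.toList_mul, List.append_assoc] at hab hcd ⊢
    exact hab.trans hcd

/-- The set of lengths whose infimum is the norm on the free product induced by seminorms on the
factors, all elements of the factors being generators. -/
abbrev coprodNormSet (N : ∀ i, GroupSeminorm (G i)) : CoprodI G → Set ℝ :=
  wordNormSet (fun p : Σ i, G i => CoprodI.of p.2) fun p => N p.1 p.2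

/-- The conjugation-invariant norm on the free product induced by seminorms on the factors. -/
noncomputable abbrev coprodNorm (N : ∀ i, GroupSeminorm (G i)) : CoprodI G → ℝ :=
  wordNorm (fun p : Σ i, G i => CoprodI.of p.2) fun p => N p.1 p.2

theorem Shortens.exists_spell_eq_mul (h : Shortens N w w' k) :
    ∃ g, spell w = g * spell w' ∧ k ∈ coprodNormSet N g := by
  induction h with
  | @delete i a v =>
    exact ⟨CoprodI.of a, by simp, gen_mem_wordNormSet (⟨i, a⟩ : Σ i, G i)⟩
  | merge a b v => exact ⟨1, by simp [mul_assoc], zero_mem_wordNormSet_one⟩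
  | cons p _ ih =>
    obtain ⟨g, hg, hk⟩ := ih
    exact ⟨CoprodI.of p.2 * g * (CoprodI.of p.2)⁻¹, by simp [hg, mul_assoc],
      mem_wordNormSet_conj _ hk⟩

theorem ReducesWithin.exists_mem_coprodNormSet (h : ReducesWithin N w x) :
    ∃ c ∈ coprodNormSet N (spell w), c ≤ x := by
  induction h with
  | nil hx => exact ⟨0, zero_mem_wordNormSet_one, hx⟩
  | @shorten _ _ k _ hs _ ih =>
    obtain ⟨g, hg, hk⟩ := hs.exists_spell_eq_mul
    obtain ⟨c, hc, hcx⟩ := ih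
    exact ⟨k + c, hg ▸ add_mem_wordNormSet_mul hk hc, add_le_add_right hcx k⟩

theorem exists_reducesWithin_conj (hN : ∀ i x y, N i (x * y * x⁻¹) = N i y) (z : CoprodI G)
    {i : ι} (a : G i) :
    ∃ w, spell w = z * CoprodI.of a * z⁻¹ ∧ ReducesWithin N w (N i a) := by
  obtain ⟨u, hu⟩ := spell_surjective z
  obtain ⟨v, hv⟩ := spell_surjective z⁻¹
  have huv : ReducesWithin N (u ++ v) 0 :=
    (reducesWithin_congr hN (by simp [hu, hv])).2 (.nil le_rfl)
  refine ⟨u ++ ⟨i, a⟩ :: v, by simp [hu, hv, mul_assoc], ?_⟩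
  simpa using huv.shorten ((Shortens.delete a v).append_left u)

theorem exists_reducesWithin_of_mem_coprodNormSet (hN : ∀ i x y, N i (x * y * x⁻¹) = N i y)
    {g : CoprodI G} (hx : x ∈ coprodNormSet N g) : ∃ w, spell w = g ∧ ReducesWithin N w x := by
  refine wordNormSet_induction (P := fun g x => ∃ w, spell w = g ∧ ReducesWithin N w x)
    ⟨[], rfl, .nil le_rfl⟩ (fun z p => exists_reducesWithin_conj hN z p.2) (fun z p => ?_) ?_ hx
  · simpa using exists_reducesWithin_conj hN z p.2⁻¹
  · rintro _ _ x y ⟨w, rfl, hw⟩ ⟨w', rfl, hw'⟩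
    exact ⟨w ++ w', by simp, hw.append hw'⟩

theorem coprodNorm_mem_coprodNormSet (hN : ∀ i x y, N i (x * y * x⁻¹) = N i y)
    (g : CoprodI G) : coprodNorm N g ∈ coprodNormSet N g := by
  obtain ⟨w, rfl⟩ := spell_surjective g
  obtain ⟨m, hm, hmin⟩ := exists_isLeast_reducesWithin N w
  have lower : m ∈ lowerBounds (coprodNormSet N (spell w)) := fun x hx => by
    obtain ⟨w', hw', hx⟩ := exists_reducesWithin_of_mem_coprodNormSet hN hx
    exact hmin ((reducesWithin_congr hN hw').1 hx)
  obtain ⟨c, hc, hcm⟩ := hm.exists_mem_coprodNormSet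
  obtain rfl : c = m := hcm.antisymm (lower hc)
  exact IsLeast.csInf_mem ⟨hc, lower⟩

theorem FR_geodesic_general (hN : ∀ i x y, N i (x * y * x⁻¹) = N i y)
    (hgeo : ∀ i, IsGeodesicNorm (N i)) : IsGeodesicNorm (coprodNorm N) := by
  have nonneg (p : Σ i, G i) : 0 ≤ N p.1 p.2 := apply_nonneg _ _
  refine isGeodesicNorm_wordNorm nonneg (coprodNorm_mem_coprodNormSet hN) fun ⟨i, a⟩ => ?_
  exact ((hgeo i).joinedWithin a).map CoprodI.of fun b => wordNorm_gen_le nonneg ⟨i, b⟩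

end FreeProduct

section RealFactors

/-- The seminorm `|r| * c` on the additive group `ℝ`. -/
def absMulSeminorm (c : ℝ) (hc : 0 ≤ c) : GroupSeminorm (Multiplicative ℝ) where
  toFun r := |r.toAdd| * c
  map_one' := by simp
  mul_le' r s := by
    rw [toAdd_mul, ← add_mul]
    exact mul_le_mul_of_nonneg_right (abs_add_le _ _) hc
  inv' r := by simp

theorem isGeodesicNorm_absMulSeminorm (c : ℝ) (hc : 0 ≤ c) :
    IsGeodesicNorm (absMulSeminorm c hc) := by
  intro r s
  refine ⟨fun t => .ofAdd (r.toAdd + t * (s.toAdd - r.toAdd)), by simp, by simp,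
    fun t₁ _ t₂ _ => ?_⟩
  change |-(r.toAdd + t₁ * (s.toAdd - r.toAdd)) + (r.toAdd + t₂ * (s.toAdd - r.toAdd))| * c =
    |t₂ - t₁| * (|-r.toAdd + s.toAdd| * c)
  rw [← mul_assoc, ← abs_mul]
  ring_nf

theorem FRnorm_eq_coprodNorm {A : Type*} (μ : A → ℝ) (hμ : ∀ a, 0 ≤ μ a) :
    FRnorm μ = coprodNorm fun a => absMulSeminorm (μ a) (hμ a) := by
  let e : A × ℝ ≃ Σ _ : A, Multiplicative ℝ :=
    { toFun p := ⟨p.1, .ofAdd p.2⟩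
      invFun q := (q.1, q.2.toAdd)
      left_inv _ := rfl
      right_inv _ := rfl }
  have hgen : genFR A =
      (fun p => CoprodI.of (M := fun _ : A => Multiplicative ℝ) (i := p.1) p.2) ∘ e := rfl
  have hlen : (fun p : A × ℝ => |p.2| * μ p.1) =
      (fun p : Σ _ : A, Multiplicative ℝ => absMulSeminorm (μ p.1) (hμ p.1) p.2) ∘ e := rfl
  rw [FRnorm, hgen, hlen]
  exact wordNorm_comp_equiv e

end RealFactors

/-- `F_ℝ(A)` with the pseudometric `d(w,w') = ‖w⁻¹w'‖_{F_ℝ(A;μ)}`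
is a geodesic pseudometric space. -/
theorem FR_geodesic
    {A : Type*} (μ : A → ℝ) (hμ : ∀ a, 0 ≤ μ a) :
    ∀ w w' : FR A, ∃ α : ℝ → FR A,
      α 0 = w ∧ α 1 = w' ∧
      ∀ t₁ ∈ Set.Icc (0:ℝ) 1, ∀ t₂ ∈ Set.Icc (0:ℝ) 1,
        FRnorm μ ((α t₁)⁻¹ * α t₂) = |t₂ - t₁| * FRnorm μ (w⁻¹ * w') := by
  rw [FRnorm_eq_coprodNorm μ hμ]
  exact FR_geodesic_general (fun a x y => by simp) fun a => isGeodesicNorm_absMulSeminorm _ (hμ a)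
end

section
/- Let G be a group equipped with a conjugation-invariant pseudonorm and let π : G → H be a metric quotient. If G (with the pseudometric induced by its pseudonorm) is a length space, then H is a length space. -/
/-!
A metric quotient maps each open ball of `G` onto the open ball of the same radius in `H`. Such a
map does not increase the length of paths, and any two points of `H` have lifts to `G` at almost the
same distance; the image of an almost shortest path between these lifts is almost shortest.
-/

open Metric Set

section WeakSubmetry

/-- A length space: any two points are joined by paths of length arbitrarily close to their
distance. A path is the restriction to `[0, 1]` of a function on `ℝ`, and its length is its total
variation there. -/
def IsLengthSpace (X : Type*) [PseudoMetricSpace X] : Prop :=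
  ∀ x y : X, ∀ ε > (0 : ℝ), ∃ γ : ℝ → X, ContinuousOn γ (Icc 0 1) ∧ γ 0 = x ∧ γ 1 = y ∧
    eVariationOn γ (Icc 0 1) < ENNReal.ofReal (dist x y + ε)

variable {X Y : Type*} [PseudoMetricSpace X] [PseudoMetricSpace Y] {f : X → Y}

/-- A weak submetry: a map carrying every open ball onto the open ball of the same radius about the
image of its centre. It is the metric property of metric quotients that preserves length spaces. -/
def IsWeakSubmetry (f : X → Y) : Prop :=
  ∀ x r, f '' ball x r = ball (f x) r

namespace IsWeakSubmetry

theorem lipschitzWith_one (hf : IsWeakSubmetry f) : LipschitzWith 1 f := by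
  refine LipschitzWith.mk_one fun x x' => le_of_forall_gt fun r hr => ?_
  have hmem : f x' ∈ ball (f x) r := hf x r ▸ mem_image_of_mem f (mem_ball'.mpr hr)
  exact mem_ball'.mp hmem

theorem exists_eq_dist_lt (hf : IsWeakSubmetry f) {x : X} {y : Y} {r : ℝ}
    (hr : dist (f x) y < r) : ∃ x', f x' = y ∧ dist x x' < r := by
  have hy : y ∈ f '' ball x r := by rwa [hf, mem_ball']
  obtain ⟨x', hx', hfx'⟩ := hy
  exact ⟨x', hfx', mem_ball'.mp hx'⟩

theorem surjective [Nonempty X] (hf : IsWeakSubmetry f) : Function.Surjective f := fun y =>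
  let ⟨x', hx', _⟩ := hf.exists_eq_dist_lt (lt_add_one (dist (f (Classical.arbitrary X)) y))
  ⟨x', hx'⟩

end IsWeakSubmetry

theorem IsLengthSpace.of_isWeakSubmetry [Nonempty X] (hX : IsLengthSpace X)
    (hf : IsWeakSubmetry f) : IsLengthSpace Y := by
  intro y y' ε hε
  obtain ⟨x, rfl⟩ := hf.surjective y
  obtain ⟨x', rfl, hxx'⟩ : ∃ x', f x' = y' ∧ dist x x' < dist (f x) y' + ε / 2 :=
    hf.exists_eq_dist_lt (lt_add_of_pos_right _ (half_pos hε))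
  obtain ⟨γ, hγ, hγ0, hγ1, hlength⟩ := hX x x' (ε / 2) (half_pos hε)
  refine ⟨f ∘ γ, hf.lipschitzWith_one.continuous.comp_continuousOn hγ, congrArg f hγ0,
    congrArg f hγ1, ?_⟩
  calc eVariationOn (f ∘ γ) (Icc 0 1)
      ≤ eVariationOn γ (Icc 0 1) := by
        simpa only [ENNReal.coe_one, one_mul] using
          hf.lipschitzWith_one.lipschitzOnWith.comp_eVariationOn_le (mapsTo_univ γ (Icc 0 1))
    _ < ENNReal.ofReal (dist x x' + ε / 2) := hlength
    _ ≤ ENNReal.ofReal (dist (f x) (f x') + ε) := ENNReal.ofReal_le_ofReal (by linarith)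

end WeakSubmetry

section MetricQuotient

variable {G H : Type*} [Group G] [Group H] {νG : G → ℝ} {νH : H → ℝ} {π : G →* H}

/-- A metric quotient of groups: a surjective homomorphism such that the norm of an element of the
target is the infimum of the norms of its lifts. The pseudonorm axioms are not part of the
definition. -/
structure IsMetricQuotient (νG : G → ℝ) (νH : H → ℝ) (π : G →* H) : Prop where
  surjective : Function.Surjective π
  norm_eq_sInf : ∀ h, νH h = sInf {x | ∃ g, π g = h ∧ νG g = x}

theorem IsMetricQuotient.norm_lt_iff (hπ : IsMetricQuotient νG νH π) (hνG : ∀ g, 0 ≤ νG g)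
    {h : H} {r : ℝ} : νH h < r ↔ ∃ g, π g = h ∧ νG g < r := by
  have hbdd : BddBelow {x | ∃ g, π g = h ∧ νG g = x} :=
    ⟨0, fun _ ⟨g, _, hg⟩ => hg ▸ hνG g⟩
  have hne : {x | ∃ g, π g = h ∧ νG g = x}.Nonempty :=
    let ⟨g, hg⟩ := hπ.surjective h
    ⟨νG g, g, hg, rfl⟩
  rw [hπ.norm_eq_sInf, csInf_lt_iff hbdd hne]
  constructor
  · rintro ⟨_, ⟨g, hg, rfl⟩, hr⟩
    exact ⟨g, hg, hr⟩
  · rintro ⟨g, hg, hr⟩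
    exact ⟨νG g, ⟨g, hg, rfl⟩, hr⟩

variable [PseudoMetricSpace G] [PseudoMetricSpace H]

theorem IsMetricQuotient.isWeakSubmetry (hπ : IsMetricQuotient νG νH π)
    (hdistG : ∀ g g' : G, dist g g' = νG (g⁻¹ * g'))
    (hdistH : ∀ h h' : H, dist h h' = νH (h⁻¹ * h')) : IsWeakSubmetry π := by
  have hνG (g : G) : 0 ≤ νG g := by
    simpa only [hdistG, inv_one, one_mul] using dist_nonneg (x := 1) (y := g)
  intro a r
  ext y
  symm
  calc y ∈ ball (π a) r
      ↔ νH ((π a)⁻¹ * y) < r := by rw [mem_ball', hdistH]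
    _ ↔ ∃ g, π g = (π a)⁻¹ * y ∧ νG g < r := hπ.norm_lt_iff hνG
    _ ↔ ∃ b, π (a⁻¹ * b) = (π a)⁻¹ * y ∧ νG (a⁻¹ * b) < r :=
        (Equiv.mulLeft a⁻¹).surjective.exists
    _ ↔ ∃ b, π b = y ∧ b ∈ ball a r := by
        simp only [map_mul, map_inv, mul_right_inj, mem_ball', hdistG]
    _ ↔ y ∈ π '' ball a r := by simp only [mem_image, and_comm]

theorem metricQuotient_length_space_general
    (hdistG : ∀ g g' : G, dist g g' = νG (g⁻¹ * g'))
    (hdistH : ∀ h h' : H, dist h h' = νH (h⁻¹ * h'))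
    (hπ : IsMetricQuotient νG νH π) (hG : IsLengthSpace G) : IsLengthSpace H :=
  hG.of_isWeakSubmetry (hπ.isWeakSubmetry hdistG hdistH)

end MetricQuotient

/-- Let `G` be a group with a conjugation-invariant pseudonorm and let
`π : G → H` be a metric quotient.  If `G` (with the induced pseudometric) is a length
space then so is `H`.  (A path's length is its total variation
`eVariationOn γ (Icc 0 1)`.) -/
theorem metricQuotient_length_space
    {G H : Type*} [Group G] [Group H]
    [PseudoMetricSpace G] [PseudoMetricSpace H]
    (νG : G → ℝ) (νH : H → ℝ)
    -- `νG` is a conjugation-invariant pseudonorm on `G`: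
    (hG_one : νG 1 = 0) (hG_nonneg : ∀ g, 0 ≤ νG g) (hG_symm : ∀ g, νG g⁻¹ = νG g)
    (hG_triangle : ∀ g g', νG (g * g') ≤ νG g + νG g')
    (hG_conj : ∀ g k, νG (k * g * k⁻¹) = νG g)
    -- `νH` is a conjugation-invariant pseudonorm on `H`:
    (hH_one : νH 1 = 0) (hH_nonneg : ∀ h, 0 ≤ νH h) (hH_symm : ∀ h, νH h⁻¹ = νH h)
    (hH_triangle : ∀ h h', νH (h * h') ≤ νH h + νH h')
    (hH_conj : ∀ h k, νH (k * h * k⁻¹) = νH h)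
    -- the pseudometrics are the ones induced by the pseudonorms:
    (hdistG : ∀ g g' : G, dist g g' = νG (g⁻¹ * g'))
    (hdistH : ∀ h h' : H, dist h h' = νH (h⁻¹ * h'))
    -- `π` is a metric quotient:
    (π : G →* H) (hsurj : Function.Surjective π)
    (hquot : ∀ h : H, νH h = sInf { x : ℝ | ∃ g : G, π g = h ∧ νG g = x })
    -- `G` is a length space:
    (hG : ∀ x y : G, ∀ ε > (0:ℝ),
      ∃ γ : ℝ → G, ContinuousOn γ (Set.Icc 0 1) ∧
        γ 0 = x ∧ γ 1 = y ∧
        eVariationOn γ (Set.Icc 0 1) < ENNReal.ofReal (dist x y + ε)) :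
    -- then `H` is a length space:
    ∀ x y : H, ∀ ε > (0:ℝ),
      ∃ γ : ℝ → H, ContinuousOn γ (Set.Icc 0 1) ∧
        γ 0 = x ∧ γ 1 = y ∧
        eVariationOn γ (Set.Icc 0 1) < ENNReal.ofReal (dist x y + ε) :=
  metricQuotient_length_space_general hdistG hdistH ⟨hsurj, hquot⟩ hG
end

section
/- Let F(A) be a free group and let θ₁, θ₂ ∈ F(A) be cyclically reduced pure elements. If θ₁^{n₁} = θ₂^{n₂} for some nonzero integers n₁, n₂, then θ₁ = θ₂ or θ₁ = θ₂⁻¹. -/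
/-!
If `θ₁ ^ n₁ = θ₂ ^ n₂`, then `θ₂` commutes with `θ₁ ^ n₁`, and hence with `θ₁`, because roots in a
free group are unique. By the Nielsen–Schreier theorem the commutative subgroup generated by `θ₁`
and `θ₂` is free, so it is cyclic. Purity then makes both `θ₁` and `θ₂` equal, up to inversion, to
a generator of this cyclic group.
-/


/-- An element `g` of a group is *pure* if it has no proper root: whenever `g = hⁿ`
for some `h` and some integer `n`, one has `h = g^{±1}` and `n = ±1`. -/
def IsPure {Γ : Type*} [Group Γ] (g : Γ) : Prop :=
  ∀ (h : Γ) (n : ℤ), g = h ^ n → (h = g ∨ h = g⁻¹) ∧ (n = 1 ∨ n = -1)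

/-- An element of a free group is *cyclically reduced* if the first letter of its
reduced word is not the inverse of the last letter. -/
def CyclicallyReduced {α : Type*} [DecidableEq α] (w : FreeGroup α) : Prop :=
  ∀ x y : α × Bool, w.toWord.head? = some x → w.toWord.getLast? = some y →
    x ≠ (y.1, !y.2)

theorem IsPure.eq_or_eq_inv_of_mem_zpowers {G : Type*} [Group G] {g c : G} (hg : IsPure g)
    (hgc : g ∈ Subgroup.zpowers c) : g = c ∨ g = c⁻¹ := by
  obtain ⟨n, hn⟩ := Subgroup.mem_zpowers_iff.mp hgc
  rcases (hg c n hn.symm).1 with hc | hc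
  · exact Or.inl hc.symm
  · exact Or.inr (inv_eq_iff_eq_inv.mp hc.symm)

theorem commute_zpow_left_iff {G : Type*} [Group G] [IsMulTorsionFree G] {a b : G} {n : ℤ}
    (hn : n ≠ 0) : Commute (a ^ n) b ↔ Commute a b := by
  refine ⟨fun h ↦ ?_, fun h ↦ h.zpow_left n⟩
  have hconj : (b * a * b⁻¹) ^ n = a ^ n := by
    rw [conj_zpow, ← h.eq, mul_inv_cancel_right]
  exact (mul_inv_eq_iff_eq_mul.mp (zpow_left_injective hn hconj)).symm

theorem commute_freeGroup_of_iff {α : Type*} {x y : α} :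
    Commute (FreeGroup.of x) (FreeGroup.of y) ↔ x = y := by
  classical
  refine ⟨fun h ↦ ?_, fun h ↦ h ▸ Commute.refl _⟩
  by_contra hxy
  have hword : (FreeGroup.of x * FreeGroup.of y).toWord =
      (FreeGroup.of y * FreeGroup.of x).toWord := congrArg FreeGroup.toWord h.eq
  simp [FreeGroup.toWord_mul, FreeGroup.reduce.cons, hxy, Ne.symm hxy] at hword

theorem isCyclic_freeGroup_of_subsingleton (α : Type*) [Subsingleton α] :
    IsCyclic (FreeGroup α) := by
  rcases isEmpty_or_nonempty α with _ | ⟨⟨x⟩⟩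
  · infer_instance
  · have := uniqueOfSubsingleton x
    infer_instance

section IsFreeGroup

variable {G : Type*} [Group G] [IsFreeGroup G]

variable (G) in
theorem isMulTorsionFree_of_isFreeGroup : IsMulTorsionFree G :=
  (IsFreeGroup.toFreeGroup G).injective.isMulTorsionFree (IsFreeGroup.toFreeGroup G).toMonoidHom

variable (G) in
theorem isCyclic_of_isFreeGroup_of_isMulCommutative [IsMulCommutative G] : IsCyclic G := by
  let e : FreeGroup (IsFreeGroup.Generators G) ≃* G := IsFreeGroup.mulEquiv G
  have hsub : Subsingleton (IsFreeGroup.Generators G) := ⟨fun x y ↦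
    commute_freeGroup_of_iff.mp <| e.injective <| by rw [map_mul, map_mul, mul_comm']⟩
  have := isCyclic_freeGroup_of_subsingleton (IsFreeGroup.Generators G)
  exact isCyclic_of_surjective e e.surjective

theorem exists_mem_zpowers_of_commute {a b : G} (h : Commute a b) :
    ∃ c : G, a ∈ Subgroup.zpowers c ∧ b ∈ Subgroup.zpowers c := by
  let H : Subgroup G := Subgroup.closure {a, b}
  have : IsMulCommutative H := Subgroup.isMulCommutative_closure <| by
    rintro x (rfl | rfl) y (rfl | rfl)
    exacts [rfl, h.eq, h.eq.symm, rfl]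
  obtain ⟨c, hc⟩ := (Subgroup.isCyclic_iff_exists_zpowers_eq_top H).mp
    (isCyclic_of_isFreeGroup_of_isMulCommutative H)
  exact ⟨c, hc ▸ Subgroup.subset_closure (by simp), hc ▸ Subgroup.subset_closure (by simp)⟩

theorem cyclicallyReduced_pure_powers_general {a b : G} (ha : IsPure a) (hb : IsPure b)
    {m n : ℤ} (hm : m ≠ 0) (h : a ^ m = b ^ n) : a = b ∨ a = b⁻¹ := by
  have := isMulTorsionFree_of_isFreeGroup G
  have hab : Commute a b := (commute_zpow_left_iff hm).mp (h ▸ Commute.zpow_self b n)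
  obtain ⟨c, hac, hbc⟩ := exists_mem_zpowers_of_commute hab
  rcases ha.eq_or_eq_inv_of_mem_zpowers hac with rfl | rfl <;>
    rcases hb.eq_or_eq_inv_of_mem_zpowers hbc with rfl | rfl <;> simp

end IsFreeGroup

/-- if `θ₁, θ₂` are cyclically reduced pure elements of a free group and
`θ₁^{n₁} = θ₂^{n₂}` for nonzero integers `n₁, n₂`, then `θ₁ = θ₂` or `θ₁ = θ₂⁻¹`. -/
theorem cyclicallyReduced_pure_powers
    {α : Type*} [DecidableEq α]
    (θ₁ θ₂ : FreeGroup α)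
    (hcr₁ : CyclicallyReduced θ₁) (hcr₂ : CyclicallyReduced θ₂)
    (hp₁ : IsPure θ₁) (hp₂ : IsPure θ₂)
    (n₁ n₂ : ℤ) (hn₁ : n₁ ≠ 0) (hn₂ : n₂ ≠ 0)
    (heq : θ₁ ^ n₁ = θ₂ ^ n₂) :
    θ₁ = θ₂ ∨ θ₁ = θ₂⁻¹ :=
  cyclicallyReduced_pure_powers_general hp₁ hp₂ hn₁ heq
end
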